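/- arXiv:math-ph/0506042 — 2 statements merged into one kernel-verified Lean document; each statement's English description precedes it below -/
import Mathlib

section
/- Fix ν ∈ ℝ and u¹, u², u³ ∈ ℝ with −ν < u¹ < u² < u³. Set γ₁ = −I₁/I₀, P₁(λ) = λ + γ₁, and let κ ∈ ℝ satisfy ∫_{u¹}^{u²} P_ν(λ)/√(R(λ)) dλ = 0 with P_ν(λ) = κ − (ν+u¹)(ν+u²)(ν+u³)/(2(λ+ν)). Define the characteristic speeds C^i(u¹,u²,u³) = u¹ + u² + u³ + 2ν − P₁(−ν) · ∏_{j≠i}(u^i − u^j) / P_ν(u^i), for i = 1, 2, 3. Then C¹(u¹,u²,u³) < C³(u¹,u²,u³) and C²(u¹,u²,u³) < C³(u¹,u²,u³); that is, the Camassa–Holm modulation (Whitham) equations ∂_t u^i + C^i(u) ∂_x u^i = 0 are hyperbolic with these orderings of the speeds. -/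
/-!
Both orderings follow from signs. The weight `1/√R` is positive and integrable on `(u1, u2)`, so
its mean of `l + ν` is positive, i.e. `P₁(-ν) < 0`. The function `P_ν` is strictly increasing on
`(-ν, ∞)` and has zero mean for this weight over `(u1, u2)`, hence changes sign there:
`P_ν(u1) < 0 < P_ν(u2) < P_ν(u3)`. Together with the signs of the products `∏_{j≠i}(u^i - u^j)`
this gives `C¹ < S`, `C² < S` and `S < C³` for `S = u1 + u2 + u3 + 2ν`.

Integrability (`intervalIntegrable_div_sqrt_quartic`) comes from factoring out of `1/√R` a
continuous function, leaving the singular factor `1/√((l - a)(b - l))`, which is at most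
`(1/√(l - a) + 1/√(b - l)) / √(b - a)`.
-/

open MeasureTheory Set

lemma intervalIntegrable_inv_sqrt (c : ℝ) :
    IntervalIntegrable (fun x : ℝ => (√x)⁻¹) volume 0 c := by
  have h : IntervalIntegrable (fun x : ℝ => x ^ (-(1 / 2) : ℝ)) volume 0 c :=
    intervalIntegral.intervalIntegrable_rpow' (by norm_num)
  rcases le_total 0 c with hc | hc
  · refine h.congr fun x hx => ?_
    rw [uIoc_of_le hc] at hx
    simp only [Real.rpow_neg hx.1.le, Real.sqrt_eq_rpow]
  · -- the square root vanishes on the negative half-line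
    refine (intervalIntegrable_const (c := (0 : ℝ))).congr fun x hx => ?_
    rw [uIoc_of_ge hc] at hx
    simp [Real.sqrt_eq_zero_of_nonpos hx.2]

lemma intervalIntegrable_inv_sqrt_mul {a b : ℝ} (hab : a < b) :
    IntervalIntegrable (fun x : ℝ => (√((x - a) * (b - x)))⁻¹) volume a b := by
  have h1 : IntervalIntegrable (fun x : ℝ => (√(x - a))⁻¹) volume a b := by
    simpa using (intervalIntegrable_inv_sqrt (b - a)).comp_sub_right a
  have h2 : IntervalIntegrable (fun x : ℝ => (√(b - x))⁻¹) volume a b := by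
    simpa using ((intervalIntegrable_inv_sqrt (b - a)).comp_sub_left b).symm
  refine ((h1.add h2).const_mul (√(b - a))⁻¹).mono_fun (by fun_prop) ?_
  rw [Filter.EventuallyLE, ae_restrict_iff' measurableSet_uIoc]
  refine Filter.Eventually.of_forall fun x hx => ?_
  rw [uIoc_of_le hab.le] at hx
  have hp : 0 < √(x - a) := Real.sqrt_pos.2 (by linarith [hx.1])
  have hs : 0 < √(b - a) := Real.sqrt_pos.2 (by linarith)
  rw [Real.norm_of_nonneg (by positivity), Real.norm_of_nonneg (by positivity),
    Real.sqrt_mul (by linarith [hx.1])]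
  rcases hx.2.eq_or_lt with rfl | hxb
  · simp; positivity
  have hq : 0 < √(b - x) := Real.sqrt_pos.2 (by linarith)
  have key : √(b - a) ≤ √(x - a) + √(b - x) := by
    rw [Real.sqrt_le_left (by positivity)]
    have ha := Real.sq_sqrt (by linarith [hx.1] : 0 ≤ x - a)
    have hb := Real.sq_sqrt (by linarith : 0 ≤ b - x)
    nlinarith [mul_pos hp hq]
  have e : (√(b - a))⁻¹ * ((√(x - a))⁻¹ + (√(b - x))⁻¹)
      = (√(x - a) * √(b - x))⁻¹ * ((√(x - a) + √(b - x)) / √(b - a)) := by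
    field_simp
    ring
  rw [e]
  exact le_mul_of_one_le_right (by positivity) ((one_le_div hs).2 key)

lemma intervalIntegrable_div_sqrt_quartic {ν a b c : ℝ} (h0 : -ν < a) (hab : a < b) (hbc : b < c)
    {g : ℝ → ℝ} (hg : ContinuousOn g (Icc a b)) :
    IntervalIntegrable (fun l => g l / √((l + ν) * (l - a) * (l - b) * (l - c))) volume a b := by
  have hc : ContinuousOn (fun l => g l / √((l + ν) * (c - l))) (uIcc a b) := by
    rw [uIcc_of_le hab.le]
    refine hg.div (by fun_prop) fun l hl => (Real.sqrt_pos.2 ?_).ne'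
    exact mul_pos (by linarith [hl.1]) (by linarith [hl.2])
  refine ((intervalIntegrable_inv_sqrt_mul hab).mul_continuousOn hc).congr fun l hl => ?_
  rw [uIoc_of_le hab.le] at hl
  have hnn : 0 ≤ (l - a) * (b - l) := mul_nonneg (by linarith [hl.1]) (by linarith [hl.2])
  have e : (l + ν) * (l - a) * (l - b) * (l - c) = (l - a) * (b - l) * ((l + ν) * (c - l)) := by
    ring
  simp only [e, Real.sqrt_mul hnn, div_eq_mul_inv, mul_inv]
  ring

lemma integral_div_sqrt_quartic_pos {ν a b c : ℝ} (h0 : -ν < a) (hab : a < b) (hbc : b < c)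
    {g : ℝ → ℝ} (hg : ContinuousOn g (Icc a b)) (hpos : ∀ l ∈ Ioo a b, 0 < g l) :
    0 < ∫ l in a..b, g l / √((l + ν) * (l - a) * (l - b) * (l - c)) := by
  refine intervalIntegral.intervalIntegral_pos_of_pos_on
    (intervalIntegrable_div_sqrt_quartic h0 hab hbc hg) (fun l hl => ?_) hab
  refine div_pos (hpos l hl) (Real.sqrt_pos.2 ?_)
  have e : (l + ν) * (l - a) * (l - b) * (l - c) = (l + ν) * (l - a) * ((b - l) * (c - l)) := by
    ring
  rw [e]
  exact mul_pos (mul_pos (by linarith [hl.1]) (by linarith [hl.1]))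
    (mul_pos (by linarith [hl.2]) (by linarith [hl.2]))

/-- hyperbolicity of the Camassa–Holm modulation equations: with
`C^i = u¹+u²+u³+2ν − P₁(−ν)·∏_{j≠i}(u^i−u^j)/P_ν(u^i)` one has `C¹ < C³` and `C² < C³`. -/
theorem stmt_3 (ν u1 u2 u3 : ℝ) (h0 : -ν < u1) (h12 : u1 < u2) (h23 : u2 < u3)
    (R : ℝ → ℝ) (hR : ∀ l, R l = (l + ν) * (l - u1) * (l - u2) * (l - u3))
    (I0 I1 : ℝ)
    (hI0 : I0 = ∫ l in u1..u2, 1 / Real.sqrt (R l))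
    (hI1 : I1 = ∫ l in u1..u2, l / Real.sqrt (R l))
    (γ1 : ℝ) (hγ1 : γ1 = -I1 / I0)
    (P1 : ℝ → ℝ) (hP1 : ∀ l, P1 l = l + γ1)
    (κ : ℝ) (Pn : ℝ → ℝ)
    (hPn : ∀ l, Pn l = κ - (ν + u1) * (ν + u2) * (ν + u3) / (2 * (l + ν)))
    (hnorm : (∫ l in u1..u2, Pn l / Real.sqrt (R l)) = 0)
    (C1 C2 C3 : ℝ)
    (hC1 : C1 = u1 + u2 + u3 + 2 * ν - P1 (-ν) * ((u1 - u2) * (u1 - u3)) / Pn u1)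
    (hC2 : C2 = u1 + u2 + u3 + 2 * ν - P1 (-ν) * ((u2 - u1) * (u2 - u3)) / Pn u2)
    (hC3 : C3 = u1 + u2 + u3 + 2 * ν - P1 (-ν) * ((u3 - u1) * (u3 - u2)) / Pn u3) :
    C1 < C3 ∧ C2 < C3 := by
  obtain rfl : R = fun l => (l + ν) * (l - u1) * (l - u2) * (l - u3) := funext hR
  have hI0pos : 0 < I0 := by
    rw [hI0]
    exact integral_div_sqrt_quartic_pos h0 h12 h23 continuousOn_const fun _ _ => one_pos
  have hm : 0 < I1 + ν * I0 := by
    have h := integral_div_sqrt_quartic_pos (g := fun l => l + ν) h0 h12 h23 (by fun_prop)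
      fun l hl => by linarith [hl.1]
    have i1 := intervalIntegrable_div_sqrt_quartic (g := fun l => l) h0 h12 h23 continuousOn_id
    have i0 := intervalIntegrable_div_sqrt_quartic (g := fun _ => 1) h0 h12 h23 continuousOn_const
    have e := intervalIntegral.integral_add i1 (i0.const_mul ν)
    rw [intervalIntegral.integral_const_mul, ← hI0, ← hI1] at e
    rw [← e]
    refine h.trans_eq (intervalIntegral.integral_congr fun l _ => ?_)
    ring
  have hP : P1 (-ν) < 0 := by
    have e : P1 (-ν) = -((I1 + ν * I0) / I0) := by
      rw [hP1, hγ1]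
      field_simp
      ring
    rw [e]
    exact neg_neg_of_pos (div_pos hm hI0pos)
  have hmono : ∀ x y, -ν < x → x < y → Pn x < Pn y := fun x y hx hxy => by
    rw [hPn, hPn]
    have hK : 0 < (ν + u1) * (ν + u2) * (ν + u3) :=
      mul_pos (mul_pos (by linarith) (by linarith)) (by linarith)
    have := div_lt_div_of_pos_left hK (by linarith : 0 < 2 * (x + ν))
      (by linarith : 2 * (x + ν) < 2 * (y + ν))
    linarith
  have hcont : ContinuousOn Pn (Icc u1 u2) := by
    rw [funext hPn]
    refine continuousOn_const.sub (continuousOn_const.div (by fun_prop) fun l hl => ?_)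
    have : 0 < 2 * (l + ν) := by linarith [hl.1]
    exact this.ne'
  have hn1 : Pn u1 < 0 := by
    by_contra! h
    exact (integral_div_sqrt_quartic_pos h0 h12 h23 hcont
      fun l hl => h.trans_lt (hmono u1 l h0 hl.1)).ne' hnorm
  have hn2 : 0 < Pn u2 := by
    by_contra! h
    have hneg := integral_div_sqrt_quartic_pos (g := fun l => -Pn l) h0 h12 h23 hcont.neg
      fun l hl => neg_pos.2 ((hmono l u2 (h0.trans hl.1) hl.2).trans_le h)
    simp only [neg_div, intervalIntegral.integral_neg] at hneg
    linarith
  have hn3 : 0 < Pn u3 := hn2.trans (hmono u2 u3 (by linarith) h23)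
  have t1 : 0 < P1 (-ν) * ((u1 - u2) * (u1 - u3)) / Pn u1 :=
    div_pos_of_neg_of_neg (mul_neg_of_neg_of_pos hP
      (mul_pos_of_neg_of_neg (by linarith) (by linarith))) hn1
  have t2 : 0 < P1 (-ν) * ((u2 - u1) * (u2 - u3)) / Pn u2 :=
    div_pos (mul_pos_of_neg_of_neg hP (mul_neg_of_pos_of_neg (by linarith) (by linarith))) hn2
  have t3 : P1 (-ν) * ((u3 - u1) * (u3 - u2)) / Pn u3 < 0 :=
    div_neg_of_neg_of_pos (mul_neg_of_neg_of_pos hP (mul_pos (by linarith) (by linarith))) hn3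
  constructor <;> linarith
end

section
/- Fix ν ∈ ℝ and u¹, v ∈ ℝ with −ν < u¹ < v. Define for −ν < u¹ < u² < u³ the first Camassa–Holm Whitham characteristic speed C¹(u¹,u²,u³) = u¹+u²+u³+2ν + 2(u¹+ν)(u¹−u²) Π(ρ², s) / ((u²+ν)(K(s) − E(s))), where s² = (u²−u¹)(u³+ν)/((u³−u¹)(u²+ν)) and ρ² = (u²−u¹)/(u²+ν). Then lim_{ε→0⁺} C¹(u¹, v−ε, v+ε) = 3u¹ + 2ν; i.e., when the two largest Riemann invariants coalesce the modulation equation for u¹ reduces to the dispersionless Camassa–Holm equation ∂_t u + (3u+2ν)∂_x u = 0. -/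
/-!
As `ε → 0⁺` the parameter `m = s²` tends to `1` from below, while `n = ρ²` tends to
`n₀ = (v - u1) / (v + ν) < 1`. The integral `K` diverges logarithmically (`ellK_lower`), `E` is
bounded by `π/2` (`abs_ellE_le`), and `Π(n, m) - K(m) / (1 - n)` stays bounded (`ellPi_sub`), because
the divergence comes from `ψ = π/2`, where `1 - n sin² ψ = 1 - n`. Hence
`Π / (K - E) → 1 / (1 - n₀) = (v + ν) / (u1 + ν)`, and the speed tends to
`u1 + 2 v + 2 ν + 2 (u1 - v) = 3 u1 + 2 ν`.
-/

open Filter Topology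

/-- Complete elliptic integral of the first kind as a function of the parameter `m = s²`. -/
noncomputable def ellK (m : ℝ) : ℝ :=
  ∫ ψ in (0:ℝ)..(Real.pi / 2), 1 / Real.sqrt (1 - m * Real.sin ψ ^ 2)

/-- Complete elliptic integral of the second kind as a function of the parameter `m = s²`. -/
noncomputable def ellE (m : ℝ) : ℝ :=
  ∫ ψ in (0:ℝ)..(Real.pi / 2), Real.sqrt (1 - m * Real.sin ψ ^ 2)

/-- Complete elliptic integral of the third kind with characteristic `n` and parameter `m = s²`. -/
noncomputable def ellPi (n m : ℝ) : ℝ :=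
  ∫ ψ in (0:ℝ)..(Real.pi / 2),
    1 / ((1 - n * Real.sin ψ ^ 2) * Real.sqrt (1 - m * Real.sin ψ ^ 2))

lemma one_sub_mul_sin_sq_pos {m : ℝ} (hm : m < 1) (ψ : ℝ) : 0 < 1 - m * Real.sin ψ ^ 2 := by
  rcases (sq_nonneg (Real.sin ψ)).eq_or_lt with h | h
  · rw [← h]; norm_num
  · nlinarith [Real.sin_sq_le_one ψ, mul_pos (sub_pos.2 hm) h]

lemma continuous_ellK_integrand {m : ℝ} (hm : m < 1) :
    Continuous fun ψ : ℝ => 1 / Real.sqrt (1 - m * Real.sin ψ ^ 2) :=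
  continuous_const.div (by fun_prop)
    fun ψ => (Real.sqrt_pos.2 (one_sub_mul_sin_sq_pos hm ψ)).ne'

lemma continuous_ellPi_integrand {n m : ℝ} (hn : n < 1) (hm : m < 1) :
    Continuous fun ψ : ℝ =>
      1 / ((1 - n * Real.sin ψ ^ 2) * Real.sqrt (1 - m * Real.sin ψ ^ 2)) :=
  continuous_const.div (by fun_prop) fun ψ => ne_of_gt (mul_pos (one_sub_mul_sin_sq_pos hn ψ)
    (Real.sqrt_pos.2 (one_sub_mul_sin_sq_pos hm ψ)))

/-- Logarithmic divergence of `K` at `m = 1`: with `δ = √(1 - m)` the integrand dominates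
`sin ψ / (δ + cos ψ)`, whose antiderivative is `-log (δ + cos ψ)`. -/
lemma ellK_lower {m : ℝ} (hm : m < 1) :
    -Real.log (Real.sqrt (1 - m)) ≤ ellK m := by
  set δ := Real.sqrt (1 - m) with hδ
  have hδ0 : 0 < δ := Real.sqrt_pos.2 (by linarith)
  have hδ2 : δ ^ 2 = 1 - m := Real.sq_sqrt (by linarith)
  have hpi := Real.pi_pos
  have hcos : ∀ ψ ∈ Set.Icc (0:ℝ) (Real.pi / 2), 0 ≤ Real.cos ψ := fun ψ h =>
    Real.cos_nonneg_of_mem_Icc ⟨by linarith [h.1], h.2⟩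
  have hcont : ContinuousOn (fun ψ => Real.sin ψ / (δ + Real.cos ψ)) (Set.uIcc 0 (Real.pi / 2)) := by
    rw [Set.uIcc_of_le (by linarith)]
    exact ContinuousOn.div (by fun_prop) (by fun_prop)
      fun ψ h => by have := hcos ψ h; positivity
  have hint : ∫ ψ in (0:ℝ)..(Real.pi / 2), Real.sin ψ / (δ + Real.cos ψ)
      = -Real.log (δ + Real.cos (Real.pi / 2)) - -Real.log (δ + Real.cos 0) := by
    refine intervalIntegral.integral_eq_sub_of_hasDerivAt
      (f := fun ψ => -Real.log (δ + Real.cos ψ)) ?_ hcont.intervalIntegrable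
    intro ψ h
    rw [Set.uIcc_of_le (by linarith)] at h
    have h1 := hcos ψ h
    have h2 : δ + Real.cos ψ ≠ 0 := by positivity
    have h3 := (((Real.hasDerivAt_cos ψ).const_add δ).log h2).neg
    exact h3.congr_deriv (by ring)
  have hmono : ∫ ψ in (0:ℝ)..(Real.pi / 2), Real.sin ψ / (δ + Real.cos ψ) ≤ ellK m := by
    refine intervalIntegral.integral_mono_on (by linarith) hcont.intervalIntegrable
      ((continuous_ellK_integrand hm).intervalIntegrable _ _) ?_
    intro ψ h
    have h1 := hcos ψ h
    have h2 := Real.sqrt_pos.2 (one_sub_mul_sin_sq_pos hm ψ)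
    refine div_le_div₀ zero_le_one (Real.sin_le_one ψ) h2 ?_
    rw [Real.sqrt_le_left (by positivity)]
    nlinarith [Real.sin_sq_add_cos_sq ψ, sq_nonneg (Real.cos ψ), mul_nonneg hδ0.le h1,
      mul_nonneg (sq_nonneg δ) (sq_nonneg (Real.cos ψ))]
  rw [hint, Real.cos_pi_div_two, Real.cos_zero, add_zero] at hmono
  have := Real.log_nonneg (show 1 ≤ δ + 1 by linarith)
  linarith

lemma abs_ellE_le {m : ℝ} (hm0 : 0 ≤ m) : |ellE m| ≤ Real.pi / 2 := by
  have hpi := Real.pi_pos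
  have := intervalIntegral.norm_integral_le_of_norm_le_const (a := (0:ℝ)) (b := Real.pi / 2)
    (C := 1) (f := fun ψ => Real.sqrt (1 - m * Real.sin ψ ^ 2)) (by
      intro ψ _
      rw [Real.norm_of_nonneg (Real.sqrt_nonneg _), Real.sqrt_le_left zero_le_one]
      nlinarith [mul_nonneg hm0 (sq_nonneg (Real.sin ψ))])
  rw [sub_zero, abs_of_pos (by linarith), one_mul] at this
  exact this

/-- The singular parts of `Π` and `K / (1 - n)` cancel: the difference of the integrands is
`-n cos² ψ / ((1 - n) (1 - n sin² ψ) √(1 - m sin² ψ))`, and `cos² ψ ≤ 1 - m sin² ψ`. -/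
lemma ellPi_sub {n m : ℝ} (hn0 : 0 ≤ n) (hn : n < 1) (hm0 : 0 ≤ m) (hm : m < 1) :
    |ellPi n m - ellK m / (1 - n)| ≤ n / (1 - n) ^ 2 * (Real.pi / 2) := by
  have hpi := Real.pi_pos
  have h1n : 0 < 1 - n := by linarith
  rw [ellPi, ellK, ← intervalIntegral.integral_div, ← intervalIntegral.integral_sub
    ((continuous_ellPi_integrand hn hm).intervalIntegrable _ _)
    (((continuous_ellK_integrand hm).div_const _).intervalIntegrable _ _)]
  have := intervalIntegral.norm_integral_le_of_norm_le_const (a := (0:ℝ)) (b := Real.pi / 2)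
    (C := n / (1 - n) ^ 2) (f := fun ψ =>
      1 / ((1 - n * Real.sin ψ ^ 2) * Real.sqrt (1 - m * Real.sin ψ ^ 2))
        - 1 / Real.sqrt (1 - m * Real.sin ψ ^ 2) / (1 - n)) (by
      intro ψ _
      have hp := one_sub_mul_sin_sq_pos hn ψ
      have hq := one_sub_mul_sin_sq_pos hm ψ
      have hcs := Real.sin_sq_add_cos_sq ψ
      have hs2 := Real.sq_sqrt hq.le
      have hs := Real.sqrt_pos.2 hq
      set S := Real.sqrt (1 - m * Real.sin ψ ^ 2) with hS
      have hp' : 1 - n ≤ 1 - n * Real.sin ψ ^ 2 := by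
        nlinarith [sq_nonneg (Real.cos ψ), mul_nonneg hn0 (sq_nonneg (Real.cos ψ))]
      have hmc : 0 ≤ m * Real.sin ψ ^ 2 := mul_nonneg hm0 (sq_nonneg _)
      have hS1 : S ≤ 1 := by
        rw [hS, Real.sqrt_le_left zero_le_one]; linarith
      have hc : Real.cos ψ ^ 2 ≤ S := by
        have h1 : Real.cos ψ ^ 2 ≤ S ^ 2 := by
          rw [hs2]; nlinarith [mul_nonneg (sub_nonneg.2 hm.le) (sq_nonneg (Real.sin ψ))]
        nlinarith
      have heq : 1 / ((1 - n * Real.sin ψ ^ 2) * S) - 1 / S / (1 - n)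
          = -(n / ((1 - n) * (1 - n * Real.sin ψ ^ 2)) * (Real.cos ψ ^ 2 / S)) := by
        have : Real.cos ψ ^ 2 = 1 - Real.sin ψ ^ 2 := by linarith
        rw [this]
        field_simp
        ring
      rw [heq, norm_neg, Real.norm_of_nonneg (by positivity)]
      calc n / ((1 - n) * (1 - n * Real.sin ψ ^ 2)) * (Real.cos ψ ^ 2 / S)
          ≤ n / ((1 - n) * (1 - n * Real.sin ψ ^ 2)) * 1 := by
            gcongr
            exact (div_le_one hs).2 hc
        _ ≤ n / (1 - n) ^ 2 := by
            rw [mul_one, pow_two (1 - n)]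
            gcongr)
  rw [sub_zero, abs_of_pos (show 0 < Real.pi / 2 by linarith)] at this
  exact this

lemma tendsto_ellK {m : ℝ → ℝ} {l : Filter ℝ} (hm : Tendsto m l (𝓝 1))
    (hm1 : ∀ᶠ x in l, m x < 1) : Tendsto (fun x => ellK (m x)) l atTop := by
  have h1 : Tendsto (fun x => Real.sqrt (1 - m x)) l (𝓝[>] 0) := by
    refine tendsto_nhdsWithin_iff.2 ⟨?_, ?_⟩
    · simpa using (tendsto_const_nhds.sub hm).sqrt (f := fun x => 1 - m x)
    · filter_upwards [hm1] with x hx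
      exact Real.sqrt_pos.2 (by linarith)
  refine tendsto_atTop_mono' l ?_
    (tendsto_neg_atBot_atTop.comp (Real.tendsto_log_nhdsGT_zero.comp h1))
  filter_upwards [hm1] with x hx using ellK_lower hx

/-- As `m → 1⁻` and `n → n₀ ∈ (0, 1)`, dividing numerator and denominator by `K → ∞` leaves only
the singular part `K / (1 - n)` of `Π`. -/
lemma tendsto_ellPi_div {m n : ℝ → ℝ} {l : Filter ℝ} {n₀ : ℝ} (hm : Tendsto m l (𝓝 1))
    (hm1 : ∀ᶠ x in l, m x < 1) (hn : Tendsto n l (𝓝 n₀)) (h0 : 0 < n₀) (h1 : n₀ < 1) :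
    Tendsto (fun x => ellPi (n x) (m x) / (ellK (m x) - ellE (m x))) l (𝓝 (1 / (1 - n₀))) := by
  have hK := tendsto_ellK hm hm1
  have hm0 : ∀ᶠ x in l, 0 < m x := hm.eventually_const_lt one_pos
  have hn0 : ∀ᶠ x in l, 0 < n x := hn.eventually_const_lt h0
  have hn1 : ∀ᶠ x in l, n x < 1 := hn.eventually_lt_const h1
  have hne : 1 - n₀ ≠ 0 := by linarith
  have hE : Tendsto (fun x => ellE (m x) / ellK (m x)) l (𝓝 0) := by
    refine squeeze_zero_norm' ?_ (hK.const_div_atTop (Real.pi / 2))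
    filter_upwards [hm0, hK.eventually_gt_atTop 0] with x hx hk
    rw [norm_div, Real.norm_of_nonneg hk.le]
    gcongr
    exact abs_ellE_le hx.le
  have hR : Tendsto (fun x => (ellPi (n x) (m x) - ellK (m x) / (1 - n x)) / ellK (m x)) l
      (𝓝 0) := by
    have hC : Tendsto (fun x => n x / (1 - n x) ^ 2 * (Real.pi / 2)) l
        (𝓝 (n₀ / (1 - n₀) ^ 2 * (Real.pi / 2))) :=
      (hn.div ((tendsto_const_nhds.sub hn).pow 2) (pow_ne_zero 2 hne)).mul_const _
    refine squeeze_zero_norm' ?_ (hC.div_atTop hK)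
    filter_upwards [hm0, hm1, hn0, hn1, hK.eventually_gt_atTop 0] with x a b c d hk
    rw [norm_div, Real.norm_of_nonneg hk.le]
    gcongr
    exact ellPi_sub c.le d a.le b
  have hmain := ((tendsto_const_nhds (x := (1:ℝ))).div (tendsto_const_nhds.sub hn) hne).add hR
    |>.div (tendsto_const_nhds (x := (1:ℝ)).sub hE) (by norm_num)
  simp only [add_zero, sub_zero, div_one] at hmain
  refine hmain.congr' ?_
  filter_upwards [hn1, hK.eventually_gt_atTop 0] with x d hk
  have hd : 1 - n x ≠ 0 := by linarith
  have e1 : 1 / (1 - n x) + (ellPi (n x) (m x) - ellK (m x) / (1 - n x)) / ellK (m x)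
      = ellPi (n x) (m x) / ellK (m x) := by
    field_simp
    ring
  have e2 : 1 - ellE (m x) / ellK (m x) = (ellK (m x) - ellE (m x)) / ellK (m x) := by
    field_simp
  simp only [Pi.div_apply, e1, e2]
  exact div_div_div_cancel_right₀ hk.ne' _ _

/-- when the two largest Riemann invariants coalesce (`u² = v−ε`, `u³ = v+ε`,
`ε → 0⁺`), the first Camassa–Holm Whitham characteristic speed tends to `3u¹ + 2ν`,
recovering the dispersionless Camassa–Holm equation. Here `C¹(a,b,c) = a+b+c+2ν +
2(a+ν)(a−b)Π(ρ²,s)/((b+ν)(K(s)−E(s)))` with `s² = (b−a)(c+ν)/((c−a)(b+ν))`,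
`ρ² = (b−a)/(b+ν)`. -/
theorem stmt_7 (ν u1 v : ℝ) (h0 : -ν < u1) (h1 : u1 < v)
    (Kf Ef : ℝ → ℝ) (Pf : ℝ → ℝ → ℝ)
    (hKf : ∀ m, Kf m = ∫ ψ in (0:ℝ)..(Real.pi / 2), 1 / Real.sqrt (1 - m * Real.sin ψ ^ 2))
    (hEf : ∀ m, Ef m = ∫ ψ in (0:ℝ)..(Real.pi / 2), Real.sqrt (1 - m * Real.sin ψ ^ 2))
    (hPf : ∀ n m, Pf n m = ∫ ψ in (0:ℝ)..(Real.pi / 2),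
        1 / ((1 - n * Real.sin ψ ^ 2) * Real.sqrt (1 - m * Real.sin ψ ^ 2)))
    (C1 : ℝ → ℝ → ℝ → ℝ)
    (hC1 : ∀ a b c, C1 a b c =
      a + b + c + 2 * ν
        + 2 * (a + ν) * (a - b) * Pf ((b - a) / (b + ν)) ((b - a) * (c + ν) / ((c - a) * (b + ν)))
          / ((b + ν) * (Kf ((b - a) * (c + ν) / ((c - a) * (b + ν)))
              - Ef ((b - a) * (c + ν) / ((c - a) * (b + ν)))))) :
    Filter.Tendsto (fun ε => C1 u1 (v - ε) (v + ε)) (nhdsWithin 0 (Set.Ioi 0))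
      (nhds (3 * u1 + 2 * ν)) := by
  obtain rfl : Kf = ellK := funext hKf
  obtain rfl : Ef = ellE := funext hEf
  obtain rfl : Pf = ellPi := funext fun n => funext (hPf n)
  have hva : 0 < v - u1 := by linarith
  have hvν : 0 < v + ν := by linarith
  have haν : 0 < u1 + ν := by linarith
  set l := nhdsWithin (0:ℝ) (Set.Ioi 0) with hl
  have hid : Tendsto (fun ε : ℝ => ε) l (𝓝 0) := tendsto_id.mono_left nhdsWithin_le_nhds
  have hb : Tendsto (fun ε : ℝ => v - ε) l (𝓝 v) := by
    simpa using (tendsto_const_nhds (x := v)).sub hid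
  have hc : Tendsto (fun ε : ℝ => v + ε) l (𝓝 v) := by
    simpa using (tendsto_const_nhds (x := v)).add hid
  have hm : Tendsto (fun ε : ℝ => (v - ε - u1) * (v + ε + ν) / ((v + ε - u1) * (v - ε + ν))) l
      (𝓝 1) := by
    have := ((hb.sub_const u1).mul (hc.add_const ν)).div
      ((hc.sub_const u1).mul (hb.add_const ν)) (by positivity)
    rwa [div_self (by positivity)] at this
  have hn : Tendsto (fun ε : ℝ => (v - ε - u1) / (v - ε + ν)) l (𝓝 ((v - u1) / (v + ν))) :=
    (hb.sub_const u1).div (hb.add_const ν) hvν.ne'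
  have hm1 : ∀ᶠ ε in l, (v - ε - u1) * (v + ε + ν) / ((v + ε - u1) * (v - ε + ν)) < 1 := by
    filter_upwards [self_mem_nhdsWithin, hb.eventually_const_lt h1] with ε hε h
    have hε' : 0 < ε := hε
    have p1 : 0 < v + ε - u1 := by linarith
    have p2 : 0 < v - ε + ν := by linarith
    rw [div_lt_one (by positivity)]
    -- the two sides differ by `2 ε (u1 + ν)`
    nlinarith [mul_pos hε' haν]
  have hlim := tendsto_ellPi_div hm hm1 hn (by positivity) ((div_lt_one hvν).2 (by linarith))
  have hcoef : Tendsto (fun ε : ℝ => 2 * (u1 + ν) * (u1 - (v - ε)) / (v - ε + ν)) l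
      (𝓝 (2 * (u1 + ν) * (u1 - v) / (v + ν))) :=
    ((hb.const_sub u1).const_mul _).div (hb.add_const ν) hvν.ne'
  have hsum : Tendsto (fun ε : ℝ => u1 + (v - ε) + (v + ε) + 2 * ν) l
      (𝓝 (u1 + v + v + 2 * ν)) := ((hb.const_add u1).add hc).add_const _
  have hval : u1 + v + v + 2 * ν
      + 2 * (u1 + ν) * (u1 - v) / (v + ν) * (1 / (1 - (v - u1) / (v + ν))) = 3 * u1 + 2 * ν := by
    have : 1 - (v - u1) / (v + ν) = (u1 + ν) / (v + ν) := by
      field_simp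
      ring
    rw [this]
    field_simp
    ring
  rw [← hval]
  refine (hsum.add (hcoef.mul hlim)).congr fun ε => ?_
  rw [hC1, div_mul_div_comm]
end
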